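/- Let F be a field of characteristic 2, let K/F be a purely inseparable extension of exponent 1 (K² ⊆ F), and let T ⊆ F be a 2-independent set such that K = F(√t : t ∈ T). Then W_q(K/F) = Σ_{t∈T} ⟨1,t⟩_b ⊗ W_q(F). -/

import Mathlib

/-!  A concrete coefficient-matrix model of (possibly singular) finite-dimensional
quadratic forms over a field, suitable for characteristic 2. -/

/-- Coefficient representation of a (finite-dimensional) quadratic form over a field `F`:
the form of dimension `dim` given by `q(x) = ∑ i j, c i j * x i * x j`. -/
structure QF (F : Type*) [Field F] : Type _ where
  dim : ℕ
  c : Matrix (Fin dim) (Fin dim) F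

namespace QF

variable {F E : Type*} [Field F] [Field E]

/-- Evaluation of the quadratic form at a vector. -/
def eval (q : QF F) (x : Fin q.dim → F) : F :=
  ∑ i, ∑ j, q.c i j * x i * x j

/-- Scalar extension (base change) of a quadratic form along a ring homomorphism. -/
def map (f : F →+* E) (q : QF F) : QF E :=
  ⟨q.dim, fun i j => f (q.c i j)⟩

/-- Orthogonal sum. -/
def orthSum (q q' : QF F) : QF F :=
  ⟨q.dim + q'.dim,
    Matrix.reindex finSumFinEquiv finSumFinEquiv (Matrix.fromBlocks q.c 0 0 q'.c)⟩

/-- Scaling `a • q`. -/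
def smul (a : F) (q : QF F) : QF F := ⟨q.dim, a • q.c⟩

/-- The nonsingular binary quadratic form `[a,b] : (x,y) ↦ ax² + xy + by²`. -/
def bin (a b : F) : QF F := ⟨2, !![a, 1; 0, b]⟩

/-- The diagonal (totally singular) quadratic form `⟨a₁, …, aₙ⟩`. -/
def diag {n : ℕ} (v : Fin n → F) : QF F := ⟨n, Matrix.diagonal v⟩

/-- The zero-dimensional quadratic form. -/
def nil : QF F := { dim := 0, c := 0 }

/-- The one-dimensional form `⟨1⟩`. -/
def unit : QF F := diag (fun _ : Fin 1 => (1 : F))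

/-- Orthogonal sum of a list of forms. -/
def sumList (l : List (QF F)) : QF F := l.foldr orthSum nil

/-- `pfTensor [a₁,…,aₙ] q` is the tensor product `⟨⟨a₁,…,aₙ⟩⟩_b ⊗ q` of the bilinear
Pfister form `⟨⟨a₁,…,aₙ⟩⟩_b = ⟨1,a₁⟩_b ⊗ ⋯ ⊗ ⟨1,aₙ⟩_b` with the quadratic form `q`,
via `⟨1,a⟩_b ⊗ q ≅ q ⊥ a·q`. -/
def pfTensor (l : List F) (q : QF F) : QF F :=
  l.foldr (fun a r => orthSum r (smul a r)) q

/-- The hyperbolic plane `ℍ ≅ [0,0]`. -/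
def hypPlane : QF F := bin 0 0

/-- The orthogonal sum of `k` hyperbolic planes. -/
def hyp (k : ℕ) : QF F := sumList (List.replicate k hypPlane)

/-- The `l`-dimensional zero form `⟨0,…,0⟩`. -/
def zeros (l : ℕ) : QF F := diag (fun _ : Fin l => (0 : F))

/-- Isometry of quadratic forms. -/
def Isometric (q q' : QF F) : Prop :=
  ∃ e : (Fin q.dim → F) ≃ₗ[F] (Fin q'.dim → F), ∀ x, q'.eval (e x) = q.eval x

/-- Anisotropy: the form has no nontrivial zero. -/
def Anisotropic (q : QF F) : Prop := ∀ x, q.eval x = 0 → x = 0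

/-- A quadratic form is nonsingular if the radical of its polar form
`B_q(x,y) = q(x+y) - q(x) - q(y)` (with matrix `c + cᵀ`) is trivial. -/
def Nonsingular (q : QF F) : Prop := ∀ x, (q.c + q.c.transpose).mulVec x = 0 → x = 0

/-- A quadratic form is totally singular if its polar form vanishes identically. -/
def TotallySingular (q : QF F) : Prop := q.c + q.c.transpose = 0

/-- A quadratic form is hyperbolic if it is isometric to an orthogonal sum of
hyperbolic planes. -/
def Hyperbolic (q : QF F) : Prop := ∃ k, Isometric q (hyp k)

/-- Witt equivalence: `q ~ q'` iff the anisotropic parts agree, equivalently the two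
forms become isometric after adding suitable numbers of hyperbolic planes and zero
forms. -/
def WittEquiv (q q' : QF F) : Prop :=
  ∃ k k' l l', Isometric (orthSum q (orthSum (hyp k) (zeros l)))
    (orthSum q' (orthSum (hyp k') (zeros l')))

/-- `AnisoPartOf φ q` : `φ` is (isometric to) the anisotropic part of `q`, i.e. `φ` is
anisotropic and `q ≅ k × ℍ ⊥ φ ⊥ ⟨0,…,0⟩`. -/
def AnisoPartOf (φ q : QF F) : Prop :=
  Anisotropic φ ∧ ∃ k l, Isometric q (orthSum (hyp k) (orthSum φ (zeros l)))

/-- `Dominates q' q` means `q ≺ q'`, i.e. `q'` dominates `q`: there is an injective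
linear map `t` of the underlying spaces with `q' ∘ t = q`. -/
def Dominates (q' q : QF F) : Prop :=
  ∃ t : (Fin q.dim → F) →ₗ[F] (Fin q'.dim → F), Function.Injective t ∧
    ∀ x, q'.eval (t x) = q.eval x

/-- The affine quadric polynomial `∑ cᵢⱼ XᵢXⱼ` of a quadratic form. -/
noncomputable def toPoly (q : QF F) : MvPolynomial (Fin q.dim) F :=
  ∑ i, ∑ j, MvPolynomial.C (q.c i j) * (MvPolynomial.X i * MvPolynomial.X j)

/-- The affine coordinate ring of the (reduced) quadric `q = 0`. -/
abbrev CoordRing (q : QF F) : Type _ :=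
  MvPolynomial (Fin q.dim) F ⧸ (Ideal.span {q.toPoly}).radical

/-- The function field of the quadric `q = 0` (assuming the quadric is integral). -/
abbrev FunctionField (q : QF F) [IsDomain (CoordRing q)] : Type _ :=
  FractionRing (CoordRing q)

/-- The canonical ring homomorphism from a base field `F` into the function field of a
quadric defined over an extension field `K` of `F`. -/
noncomputable def toFunctionField {K : Type*} [Field K] [Algebra F K] (q : QF K)
    [IsDomain (CoordRing q)] : F →+* FunctionField q :=
  (algebraMap (CoordRing q) (FunctionField q)).comp
    ((algebraMap K (CoordRing q)).comp (algebraMap F K))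

end QF

/-!
The classes of the binary forms `[a, b]` generate `W_q(F)`. They are biadditive and symmetric, and
satisfy `[c + b c², b] = 0` and `[c² a, b] = [a, c² b]`. Suppose that `∑ᵢ [aᵢ, bᵢ]` with
`aᵢ, bᵢ ∈ F` vanishes over `K`. Rescaling a nontrivial zero `(xᵢ, yᵢ)` so that `x₀ = 1`, one sees
that `c = ∑ᵢ xᵢ yᵢ` lies in `F`, because all squares of `K` do; the relations then absorb `[a₀, b₀]`
into the other terms, replacing `aᵢ, bᵢ` by `aᵢ + b₀ yᵢ², bᵢ + b₀ xᵢ²`. This rewriting moves only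
squares of `K` across symbols, and `K²` is generated by `F²` and `T` while `[t a, b] = t [a, t b]`,
so it is also valid in `W_q(F)` modulo `∑ ⟨1, t⟩_b ⊗ W_q(F)`; induction on the number of symbols
shows that the sum lies in this subgroup.
-/

open QuadraticMap

section QuadraticForm

variable {k V V₁ V₂ : Type*} [Field k]
  [AddCommGroup V] [Module k V] [AddCommGroup V₁] [Module k V₁] [AddCommGroup V₂] [Module k V₂]
  {Q : QuadraticForm k V} {Q₁ : QuadraticForm k V₁} {Q₂ : QuadraticForm k V₂}

/-- A quadratic form is nonsingular if its polar form has trivial radical. In characteristic `2`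
this is stronger than `QuadraticMap.Nondegenerate`, which allows an anisotropic radical. -/
def IsNonsingular (Q : QuadraticForm k V) : Prop :=
  ∀ x, (∀ y, polar Q x y = 0) → x = 0

/-- A quadratic form is metabolic if it has a Lagrangian: a totally singular subspace that contains
its own orthogonal complement. For nonsingular forms this is hyperbolicity, but Lagrangians are
easier to produce than hyperbolic bases, and zero forms are allowed as summands. -/
def IsMetabolic (Q : QuadraticForm k V) : Prop :=
  ∃ L : Submodule k V, (∀ x ∈ L, Q x = 0) ∧ ∀ x, (∀ y ∈ L, polar Q x y = 0) → x ∈ L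

theorem polar_eq_of_isometryEquiv (e : Q₁.IsometryEquiv Q₂) (x y : V₁) :
    polar Q₂ (e x) (e y) = polar Q₁ x y := by
  simp only [polar, ← map_add, e.map_app]

namespace IsNonsingular

theorem of_equivalent (hQ : IsNonsingular Q₁) (h : Q₁.Equivalent Q₂) : IsNonsingular Q₂ := by
  obtain ⟨e⟩ := h
  intro x hx
  have : e.symm x = 0 := hQ _ fun y ↦ by
    rw [← polar_eq_of_isometryEquiv e, e.apply_symm_apply, hx]
  simpa using congr_arg e this

theorem prod (h₁ : IsNonsingular Q₁) (h₂ : IsNonsingular Q₂) : IsNonsingular (Q₁.prod Q₂) :=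
  fun x hx ↦ Prod.ext (h₁ _ fun y ↦ by simpa using hx (y, 0))
    (h₂ _ fun y ↦ by simpa using hx (0, y))

theorem of_prod_right (h : IsNonsingular (Q₁.prod Q₂)) : IsNonsingular Q₂ := fun x hx ↦
  congr_arg Prod.snd (h (0, x) fun y ↦ by simpa using hx y.2)

theorem smul (hQ : IsNonsingular Q) {c : k} (hc : c ≠ 0) : IsNonsingular (c • Q) := fun x hx ↦
  hQ x fun y ↦ by simpa [polar_smul, hc] using hx y

theorem neg (hQ : IsNonsingular Q) : IsNonsingular (-Q) := by
  rw [← neg_one_smul k Q]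
  exact hQ.smul (neg_ne_zero.2 one_ne_zero)

theorem exists_polar_eq_one (hQ : IsNonsingular Q) {x : V} (hx : x ≠ 0) :
    ∃ y, polar Q x y = 1 := by
  obtain ⟨y, hy⟩ := not_forall.1 (mt (hQ x) hx)
  exact ⟨(polar Q x y)⁻¹ • y, by simp [hy]⟩

theorem isMetabolic_prod_neg (hQ : IsNonsingular Q) : IsMetabolic (Q.prod (-Q)) := by
  refine ⟨LinearMap.eqLocus (LinearMap.fst k V V) (LinearMap.snd k V V), ?_, fun x hx ↦ ?_⟩
  · rintro ⟨x, y⟩ (rfl : x = y)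
    simp
  · refine sub_eq_zero.1 (hQ _ fun y ↦ ?_)
    simpa [polar_neg, sub_eq_add_neg, polar_add_left] using hx (y, y) rfl

end IsNonsingular

namespace IsMetabolic

theorem of_equivalent (h : IsMetabolic Q₁) (hQ : Q₁.Equivalent Q₂) : IsMetabolic Q₂ := by
  obtain ⟨e⟩ := hQ
  obtain ⟨L, hL, hL'⟩ := h
  refine ⟨L.comap e.symm.toLinearEquiv.toLinearMap, fun x hx ↦ ?_, fun x hx ↦ hL' _ fun y hy ↦ ?_⟩
  · exact (e.symm.map_app x).symm.trans (hL _ hx)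
  · rw [← hx (e y) (by simpa using hy), ← polar_eq_of_isometryEquiv e]
    simp

theorem of_subsingleton [Subsingleton V] (Q : QuadraticForm k V) : IsMetabolic Q :=
  ⟨⊤, fun x _ ↦ by rw [Subsingleton.elim x 0, map_zero], fun _ _ ↦ trivial⟩

theorem zero : IsMetabolic (0 : QuadraticForm k V) :=
  ⟨⊤, fun _ _ ↦ rfl, fun _ _ ↦ trivial⟩

theorem neg (h : IsMetabolic Q) : IsMetabolic (-Q) := by
  obtain ⟨L, hL, hL'⟩ := h
  exact ⟨L, fun x hx ↦ by simp [hL x hx],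
    fun x hx ↦ hL' x fun y hy ↦ by simpa [polar_neg] using hx y hy⟩

theorem smul (h : IsMetabolic Q) {c : k} (hc : c ≠ 0) : IsMetabolic (c • Q) := by
  obtain ⟨L, hL, hL'⟩ := h
  exact ⟨L, fun x hx ↦ by simp [hL x hx],
    fun x hx ↦ hL' x fun y hy ↦ by simpa [polar_smul, hc] using hx y hy⟩

theorem prod (h₁ : IsMetabolic Q₁) (h₂ : IsMetabolic Q₂) : IsMetabolic (Q₁.prod Q₂) := by
  obtain ⟨L₁, hL₁, hL₁'⟩ := h₁
  obtain ⟨L₂, hL₂, hL₂'⟩ := h₂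
  refine ⟨L₁.prod L₂, fun x hx ↦ by simp [hL₁ _ hx.1, hL₂ _ hx.2], fun x hx ↦ ⟨?_, ?_⟩⟩
  · exact hL₁' _ fun y hy ↦ by simpa using hx (y, 0) ⟨hy, zero_mem _⟩
  · exact hL₂' _ fun y hy ↦ by simpa using hx (0, y) ⟨zero_mem _, hy⟩

theorem exists_isotropic [Nontrivial V] (h : IsMetabolic Q) : ∃ x, x ≠ 0 ∧ Q x = 0 := by
  obtain ⟨L, hL, hL'⟩ := h
  obtain ⟨x, hx⟩ := exists_ne (0 : V)
  by_cases hbot : L = ⊥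
  · subst hbot
    exact absurd (hL' x (by simp)) (by simpa using hx)
  · obtain ⟨y, hy, hy0⟩ := L.ne_bot_iff.1 hbot
    exact ⟨y, hy0, hL y hy⟩

/-- Every functional vanishing on a Lagrangian `L` of a finite-dimensional form is represented by a
vector of `L`, since the functionals represented by `L` are closed under double annihilators. -/
theorem exists_polar_eq [FiniteDimensional k V] {L : Submodule k V}
    (hL' : ∀ x, (∀ y ∈ L, polar Q x y = 0) → x ∈ L) {φ : Module.Dual k V}
    (hφ : ∀ x ∈ L, φ x = 0) : ∃ m ∈ L, Q.polarBilin m = φ := by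
  have hco : (L.map Q.polarBilin).dualCoannihilator ≤ L := fun x hx ↦ hL' x fun y hy ↦ by
    rw [polar_comm]
    exact (Submodule.mem_dualCoannihilator x).1 hx _ (Submodule.mem_map_of_mem hy)
  have hmem : φ ∈ (L.map Q.polarBilin).dualCoannihilator.dualAnnihilator :=
    (Submodule.mem_dualAnnihilator φ).2 fun x hx ↦ hφ x (hco hx)
  rwa [Subspace.dualCoannihilator_dualAnnihilator_eq] at hmem

theorem cancel [FiniteDimensional k V₂] (h : IsMetabolic (Q₁.prod Q₂)) (h₂ : IsMetabolic Q₂) :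
    IsMetabolic Q₁ := by
  obtain ⟨L, hL, hL'⟩ := h
  obtain ⟨M, hM, hM'⟩ := h₂
  let C := M.comap (LinearMap.snd k V₁ V₂)
  refine ⟨(L ⊓ C).map (LinearMap.fst k V₁ V₂), ?_, fun x hx ↦ ?_⟩
  · rintro _ ⟨⟨x, y⟩, ⟨hxy, hy⟩, rfl⟩
    simpa [hM y hy] using hL _ hxy
  have hann : (Q₁.prod Q₂).polarBilin (x, 0) ∈ (L ⊓ C).dualAnnihilator :=
    (Submodule.mem_dualAnnihilator _).2 fun z hz ↦ by
      simpa using hx z.1 (Submodule.mem_map_of_mem hz)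
  rw [Subspace.dualAnnihilator_inf_eq] at hann
  obtain ⟨φ, hφ, ψ, hψ, hφψ⟩ := Submodule.mem_sup.1 hann
  obtain ⟨m, hm, hmψ⟩ := exists_polar_eq hM' (φ := ψ ∘ₗ LinearMap.inr k V₁ V₂)
    fun y hy ↦ (Submodule.mem_dualAnnihilator ψ).1 hψ (0, y) hy
  refine ⟨(x, -m), ⟨hL' _ fun z hz ↦ ?_, M.neg_mem hm⟩, rfl⟩
  have hφz : φ z = 0 := (Submodule.mem_dualAnnihilator φ).1 hφ z hz
  have hψz : ψ z = polar Q₂ m z.2 := by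
    have h₁ : ψ (z.1, 0) = 0 := (Submodule.mem_dualAnnihilator ψ).1 hψ (z.1, 0) M.zero_mem
    have h₂ : polar Q₂ m z.2 = ψ (0, z.2) := LinearMap.congr_fun hmψ z.2
    rw [h₂, ← zero_add (ψ (0, z.2)), ← h₁, ← map_add, Prod.mk_add_mk, add_zero, zero_add]
  have hz := LinearMap.congr_fun hφψ z
  simp only [LinearMap.add_apply, hφz, hψz, zero_add, polarBilin_apply_apply, polar_prod,
    polar_zero_left, add_zero] at hz
  simp [polar_neg_left, ← hz]

end IsMetabolic

theorem pi_fin_succ_equivalent {n : ℕ} (R : Fin (n + 1) → QuadraticForm k V) :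
    ((R 0).prod (QuadraticMap.pi fun i : Fin n ↦ R i.succ)).Equivalent (QuadraticMap.pi R) :=
  ⟨⟨Fin.consLinearEquiv k fun _ ↦ V, fun x ↦ by simp [pi_apply, Fin.sum_univ_succ]⟩⟩

theorem IsNonsingular.pi {n : ℕ} {R : Fin n → QuadraticForm k V} (hR : ∀ i, IsNonsingular (R i)) :
    IsNonsingular (QuadraticMap.pi R) := fun x hx ↦ funext fun i ↦ hR i _ fun y ↦ by
  have hy := hx (Pi.single i y)
  rwa [Ring.polar_pi, Finset.sum_eq_single i (fun j _ hj ↦ by simp [Pi.single_eq_of_ne hj])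
    (by simp), Pi.single_eq_same] at hy

theorem equivalent_of_subsingleton [Subsingleton V₁] [Subsingleton V₂] (Q₁ : QuadraticForm k V₁)
    (Q₂ : QuadraticForm k V₂) : Q₁.Equivalent Q₂ :=
  ⟨⟨0, fun x ↦ by rw [Subsingleton.elim x 0]; exact (map_zero Q₂).trans (map_zero Q₁).symm⟩⟩

/-- The binary form `[a, b] : (x, y) ↦ a x² + x y + b y²`. -/
def binForm (a b : k) : QuadraticForm k (k × k) :=
  a • linMulLin (LinearMap.fst k k k) (LinearMap.fst k k k) +
    linMulLin (LinearMap.fst k k k) (LinearMap.snd k k k) +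
    b • linMulLin (LinearMap.snd k k k) (LinearMap.snd k k k)

@[simp]
theorem binForm_apply (a b : k) (x : k × k) :
    binForm a b x = a * x.1 ^ 2 + x.1 * x.2 + b * x.2 ^ 2 := by
  simp [binForm, pow_two]

theorem finrank_lt_of_equivalent_binForm_prod [FiniteDimensional k V₁] {a b : k}
    (h : Q.Equivalent ((binForm a b).prod Q₁)) : Module.finrank k V₁ < Module.finrank k V := by
  obtain ⟨e⟩ := h
  simp [e.toLinearEquiv.finrank_eq]

section CharTwo

variable [CharP k 2]

theorem polar_self_charTwo (Q : QuadraticForm k V) (x : V) : polar Q x x = 0 := by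
  rw [polar_self, two_nsmul, CharTwo.add_self_eq_zero]

theorem neg_eq_self_charTwo (Q : QuadraticForm k V) : -Q = Q :=
  QuadraticMap.ext fun x ↦ CharTwo.neg_eq (Q x)

@[simp]
theorem polar_binForm (a b : k) (x y : k × k) :
    polar (binForm a b) x y = x.1 * y.2 + x.2 * y.1 := by
  simp only [polar, binForm_apply, Prod.fst_add, Prod.snd_add]
  linear_combination (a * x.1 * y.1 + b * x.2 * y.2) * CharTwo.two_eq_zero (R := k)

theorem isNonsingular_binForm (a b : k) : IsNonsingular (binForm a b) := fun x hx ↦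
  Prod.ext (by simpa using hx (0, 1)) (by simpa using hx (1, 0))

theorem isMetabolic_binForm_zero_right (a : k) : IsMetabolic (binForm a 0) := by
  refine ⟨LinearMap.ker (LinearMap.fst k k k), ?_, fun x hx ↦ ?_⟩
  · rintro ⟨x, y⟩ (rfl : x = 0)
    simp
  · simpa using hx (0, 1) rfl

theorem exists_equivalent_binForm_prod {v w : V} (hvw : polar Q v w = 1) :
    ∃ W : Submodule k V, Q.Equivalent ((binForm (Q v) (Q w)).prod (Q.restrict W)) := by
  let W := LinearMap.ker (Q.polarBilin v) ⊓ LinearMap.ker (Q.polarBilin w)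
  have hwv : polar Q w v = 1 := by rwa [polar_comm]
  have hW (x : V) : x - (polar Q w x • v + polar Q v x • w) ∈ W := by
    simp [W, polar_sub_right, polar_add_right, polar_smul_right, hvw, hwv, polar_self_charTwo,
      -polar_self]
  have hWv (u : W) : polar Q v u = 0 := u.2.1
  have hWw (u : W) : polar Q w u = 0 := u.2.2
  let φ : (k × k) × W →ₗ[k] V :=
    ((LinearMap.toSpanSingleton k V v).coprod (LinearMap.toSpanSingleton k V w)).coprod W.subtype
  have hφ (z : (k × k) × W) : φ z = z.1.1 • v + z.1.2 • w + z.2 := by simp [φ]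
  have hφv (z : (k × k) × W) : polar Q v (φ z) = z.1.2 := by
    simp [hφ, polar_add_right, polar_smul_right, hvw, hWv, polar_self_charTwo, -polar_self]
  have hφw (z : (k × k) × W) : polar Q w (φ z) = z.1.1 := by
    simp [hφ, polar_add_right, polar_smul_right, hwv, hWw, polar_self_charTwo, -polar_self]
  have hinj : Function.Injective φ := by
    refine (injective_iff_map_eq_zero φ).2 fun z hz ↦ ?_
    have h₁ : z.1.1 = 0 := by rw [← hφw, hz, polar_zero_right]
    have h₂ : z.1.2 = 0 := by rw [← hφv, hz, polar_zero_right]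
    exact Prod.ext (Prod.ext h₁ h₂) (Subtype.ext (by simpa [hφ, h₁, h₂] using hz))
  have hsurj : Function.Surjective φ := fun x ↦
    ⟨((polar Q w x, polar Q v x), ⟨_, hW x⟩), by rw [hφ]; exact add_sub_cancel _ _⟩
  refine ⟨W, Equivalent.symm ⟨⟨LinearEquiv.ofBijective φ ⟨hinj, hsurj⟩, fun z ↦ ?_⟩⟩⟩
  change Q (φ z) = _
  simp only [hφ, QuadraticMap.map_add Q, QuadraticMap.map_smul, polar_add_left, polar_smul_left,
    polar_smul_right, hvw, hWv, hWw, smul_eq_mul, prod_apply, binForm_apply, restrict_apply]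
  ring

theorem IsNonsingular.exists_equivalent_pi_binForm {V : Type*} [AddCommGroup V] [Module k V]
    [FiniteDimensional k V] {Q : QuadraticForm k V} (hQ : IsNonsingular Q) :
    ∃ (n : ℕ) (a b : Fin n → k), Q.Equivalent (QuadraticMap.pi fun i ↦ binForm (a i) (b i)) := by
  rcases subsingleton_or_nontrivial V with _ | _
  · exact ⟨0, 0, 0, equivalent_of_subsingleton _ _⟩
  obtain ⟨v, hv⟩ := exists_ne (0 : V)
  obtain ⟨w, hvw⟩ := hQ.exists_polar_eq_one hv
  obtain ⟨W, hW⟩ := exists_equivalent_binForm_prod hvw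
  have := finrank_lt_of_equivalent_binForm_prod hW
  obtain ⟨n, a, b, hab⟩ := (hQ.of_equivalent hW).of_prod_right.exists_equivalent_pi_binForm
  refine ⟨n + 1, Fin.cons (Q v) a, Fin.cons (Q w) b,
    hW.trans <| ((Equivalent.refl _).prod hab).trans ?_⟩
  exact pi_fin_succ_equivalent
    fun i ↦ binForm (Fin.cons (α := fun _ ↦ k) (Q v) a i) (Fin.cons (α := fun _ ↦ k) (Q w) b i)
termination_by Module.finrank k V

theorem IsMetabolic.exists_equivalent_pi_hyperbolic {V : Type*} [AddCommGroup V] [Module k V]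
    [FiniteDimensional k V] {Q : QuadraticForm k V} (h : IsMetabolic Q) (hQ : IsNonsingular Q) :
    ∃ n : ℕ, Q.Equivalent (QuadraticMap.pi fun _ : Fin n ↦ binForm (0 : k) 0) := by
  rcases subsingleton_or_nontrivial V with _ | _
  · exact ⟨0, equivalent_of_subsingleton _ _⟩
  obtain ⟨v, hv, hQv⟩ := h.exists_isotropic
  obtain ⟨w, hvw⟩ := hQ.exists_polar_eq_one hv
  have hvw' : polar Q v (w - Q w • v) = 1 := by
    simp [polar_sub_right, hvw, polar_self_charTwo, -polar_self]
  have hQw' : Q (w - Q w • v) = 0 := by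
    rw [sub_eq_add_neg, QuadraticMap.map_add Q, polar_neg_right, polar_smul_right, polar_comm, hvw]
    simp [hQv, QuadraticMap.map_smul]
  obtain ⟨W, hW⟩ := exists_equivalent_binForm_prod hvw'
  rw [hQv, hQw'] at hW
  have := finrank_lt_of_equivalent_binForm_prod hW
  have hres : IsMetabolic (Q.restrict W) :=
    (h.of_equivalent (hW.trans ⟨IsometryEquiv.prodComm _ _⟩)).cancel
      (isMetabolic_binForm_zero_right 0)
  obtain ⟨n, hn⟩ := hres.exists_equivalent_pi_hyperbolic (hQ.of_equivalent hW).of_prod_right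
  exact ⟨n + 1, hW.trans <| ((Equivalent.refl _).prod hn).trans <|
    pi_fin_succ_equivalent fun _ : Fin (n + 1) ↦ binForm (0 : k) 0⟩
termination_by Module.finrank k V

end CharTwo
end QuadraticForm

section MatrixForm

open Matrix

variable {k ι : Type*} [Field k] [Fintype ι] [DecidableEq ι]

theorem toQuadraticForm'_apply (M : Matrix ι ι k) (x : ι → k) :
    M.toQuadraticForm' x = ∑ i, ∑ j, x i * M i j * x j :=
  toBilin'_apply M x x

theorem polar_toQuadraticForm' (M : Matrix ι ι k) (x y : ι → k) :
    polar M.toQuadraticForm' x y = (M + Mᵀ) *ᵥ x ⬝ᵥ y := by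
  rw [toQuadraticForm', LinearMap.BilinMap.polar_toQuadraticMap, toLinearMap₂'_apply',
    toLinearMap₂'_apply', add_mulVec, add_dotProduct, mulVec_transpose, ← dotProduct_mulVec,
    dotProduct_comm y, add_comm]

theorem isNonsingular_toQuadraticForm'_iff {M : Matrix ι ι k} :
    IsNonsingular M.toQuadraticForm' ↔ (M + Mᵀ).det ≠ 0 := by
  rw [Ne, ← exists_mulVec_eq_zero_iff]
  simp only [IsNonsingular, polar_toQuadraticForm', dotProduct_eq_zero_iff]
  grind

theorem eq_zero_of_mem_span {V : Type*} [AddCommGroup V] [Module k V] {Q : QuadraticForm k V}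
    {S : Set V} (hQ : ∀ x ∈ S, Q x = 0) (hS : ∀ x ∈ S, ∀ y ∈ S, polar Q x y = 0) {x : V}
    (hx : x ∈ Submodule.span k S) : Q x = 0 := by
  have hpolar : ∀ x ∈ Submodule.span k S, ∀ y ∈ Submodule.span k S, polar Q x y = 0 := by
    intro x hx y hy
    induction hx, hy using Submodule.span_induction₂ with
    | mem_mem x y hx hy => exact hS x hx y hy
    | _ => simp_all [polar_add_left, polar_add_right, polar_smul_left, polar_smul_right]
  induction hx using Submodule.span_induction with
  | mem x hx => exact hQ x hx
  | zero => exact map_zero Q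
  | add x y hx hy hQx hQy => rw [QuadraticMap.map_add Q, hQx, hQy, hpolar x hx y hy]; simp
  | smul c x _ hQx => rw [QuadraticMap.map_smul, hQx, smul_zero]

variable {F K : Type*} [Field F] [Field K] [Algebra F K] {M : Matrix ι ι F}

theorem toQuadraticForm'_map_algebraMap_comp (M : Matrix ι ι F) (x : ι → F) :
    (M.map (algebraMap F K)).toQuadraticForm' (algebraMap F K ∘ x) =
      algebraMap F K (M.toQuadraticForm' x) := by
  simp [toQuadraticForm'_apply]

theorem polar_toQuadraticForm'_comp (M : Matrix ι ι F) (φ : K →ₗ[F] F) (z : ι → K) (y : ι → F) :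
    polar M.toQuadraticForm' (φ ∘ z) y =
      φ (polar (M.map (algebraMap F K)).toQuadraticForm' z (algebraMap F K ∘ y)) := by
  simp only [polar_toQuadraticForm', dotProduct, mulVec, map_sum, Finset.sum_mul, Matrix.add_apply,
    transpose_apply, Matrix.map_apply, Function.comp_apply, ← map_add]
  refine Finset.sum_congr rfl fun i _ ↦ Finset.sum_congr rfl fun j _ ↦ ?_
  rw [mul_right_comm _ (z j), ← map_mul, ← Algebra.smul_def, map_smul, smul_eq_mul,
    mul_right_comm]

theorem IsNonsingular.toQuadraticForm'_map (hM : IsNonsingular M.toQuadraticForm') :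
    IsNonsingular (M.map (algebraMap F K)).toQuadraticForm' := by
  rw [isNonsingular_toQuadraticForm'_iff] at hM ⊢
  rw [← transpose_map, ← Matrix.map_add _ (map_add _), ← RingHom.mapMatrix_apply,
    ← RingHom.map_det]
  exact (map_ne_zero _).2 hM

/-- Coordinates with respect to an `F`-basis of `K` reduce orthogonality to the scalar extension of
a Lagrangian to orthogonality to the Lagrangian itself. -/
theorem IsMetabolic.toQuadraticForm'_map (h : IsMetabolic M.toQuadraticForm') :
    IsMetabolic (M.map (algebraMap F K)).toQuadraticForm' := by
  obtain ⟨L, hL, hL'⟩ := h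
  let S : Set (ι → K) := (algebraMap F K ∘ ·) '' (L : Set (ι → F))
  have hS : ∀ x ∈ S, (M.map (algebraMap F K)).toQuadraticForm' x = 0 := by
    rintro _ ⟨x, hx, rfl⟩
    simp [toQuadraticForm'_map_algebraMap_comp, hL x hx]
  have hpolar : ∀ x ∈ S, ∀ y ∈ S, polar (M.map (algebraMap F K)).toQuadraticForm' x y = 0 := by
    rintro _ ⟨x, hx, rfl⟩ _ ⟨y, hy, rfl⟩
    have hxy : (M.map (algebraMap F K)).toQuadraticForm'
        (algebraMap F K ∘ x + algebraMap F K ∘ y) = 0 :=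
      hS _ ⟨x + y, L.add_mem hx hy, funext fun i ↦ map_add _ _ _⟩
    simp [polar, hxy, hS _ ⟨x, hx, rfl⟩, hS _ ⟨y, hy, rfl⟩]
  refine ⟨Submodule.span K S, fun x hx ↦ ?_, fun z hz ↦ ?_⟩
  · exact eq_zero_of_mem_span hS hpolar hx
  · classical
    let b := Module.Basis.ofVectorSpace F K
    have hmem (i) : b.coord i ∘ z ∈ L := hL' _ fun y hy ↦ by
      rw [polar_toQuadraticForm'_comp, hz _ (Submodule.subset_span ⟨y, hy, rfl⟩), map_zero]
    let s := Finset.univ.biUnion fun i ↦ (b.repr (z i)).support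
    have hz : z = ∑ i ∈ s, b i • (algebraMap F K ∘ b.coord i ∘ z) := funext fun j ↦ by
      have hj : (b.repr (z j)).support ⊆ s :=
        Finset.subset_biUnion_of_mem (fun i ↦ (b.repr (z i)).support) (Finset.mem_univ j)
      rw [← b.linearCombination_repr (z j), Finsupp.linearCombination_apply,
        Finsupp.sum_of_support_subset _ hj _ (by simp)]
      simp [Algebra.smul_def, mul_comm]
    rw [hz]
    exact sum_mem fun i _ ↦ Submodule.smul_mem _ _ (Submodule.subset_span ⟨_, hmem i, rfl⟩)

end MatrixForm

namespace QF

variable {F : Type*} [Field F]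

/-- The quadratic form on `Fin q.dim → F` given by the coefficients of `q`. -/
noncomputable def toForm (q : QF F) : QuadraticForm F (Fin q.dim → F) :=
  q.c.toQuadraticForm'

theorem toForm_apply (q : QF F) (x : Fin q.dim → F) : q.toForm x = q.eval x := by
  simp only [toForm, toQuadraticForm'_apply, eval, mul_comm (x _)]

theorem nonsingular_iff {q : QF F} : q.Nonsingular ↔ IsNonsingular q.toForm := by
  simp only [toForm, IsNonsingular, Nonsingular, polar_toQuadraticForm', dotProduct_eq_zero_iff]

theorem isometric_iff {q q' : QF F} : Isometric q q' ↔ q.toForm.Equivalent q'.toForm := by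
  simp only [Isometric, ← toForm_apply]
  exact ⟨fun ⟨e, he⟩ ↦ ⟨⟨e, he⟩⟩, fun ⟨e⟩ ↦ ⟨e.toLinearEquiv, e.map_app⟩⟩

theorem smul_equivalent_toForm (a : F) (q : QF F) :
    (a • q.toForm).Equivalent (smul a q).toForm := by
  refine ⟨⟨LinearEquiv.refl F _, fun x ↦ ?_⟩⟩
  change Matrix.toLinearMap₂' F (a • q.c) x x = _
  rw [_root_.map_smul]
  rfl

theorem toForm_zeros (l : ℕ) : (zeros l : QF F).toForm = 0 := by
  change (Matrix.diagonal 0).toQuadraticForm' = 0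
  rw [Matrix.diagonal_zero', Matrix.toQuadraticForm', _root_.map_zero,
    LinearMap.BilinMap.toQuadraticMap_zero]

theorem binForm_equivalent_toForm (a b : F) : (binForm a b).Equivalent (bin a b).toForm := by
  refine ⟨⟨(LinearEquiv.finTwoArrow F F).symm, fun x ↦ ?_⟩⟩
  change (!![a, 1; 0, b]).toQuadraticForm' ![x.1, x.2] = _
  simp only [toQuadraticForm'_apply, Fin.sum_univ_two, Matrix.of_apply, Matrix.cons_val,
    binForm_apply]
  ring

theorem prod_equivalent_orthSum (q q' : QF F) :
    (q.toForm.prod q'.toForm).Equivalent (orthSum q q').toForm := by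
  let e := (LinearEquiv.sumArrowLequivProdArrow (Fin q.dim) (Fin q'.dim) F F).symm.trans
    (LinearEquiv.funCongrLeft F F finSumFinEquiv.symm)
  refine ⟨⟨e, fun ⟨x, y⟩ ↦ ?_⟩⟩
  change (Matrix.reindex finSumFinEquiv finSumFinEquiv
    (Matrix.fromBlocks q.c 0 0 q'.c)).toQuadraticForm' (e (x, y)) = _
  simp [e, toForm, toQuadraticForm'_apply, ← finSumFinEquiv.sum_comp, Fintype.sum_sum_type]

theorem exists_toForm_equivalent {V : Type*} [AddCommGroup V] [Module F V]
    [FiniteDimensional F V] (Q : QuadraticForm F V) : ∃ q : QF F, Q.Equivalent q.toForm := by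
  let B := (Q.basisRepr (Module.finBasis F V)).toBilin (Pi.basisFun F _)
  refine ⟨⟨_, LinearMap.BilinForm.toMatrix' B⟩, ?_⟩
  have hB : (LinearMap.BilinForm.toMatrix' B).toQuadraticForm' =
      Q.basisRepr (Module.finBasis F V) :=
    (congr_arg LinearMap.BilinMap.toQuadraticMap (Matrix.toBilin'_toMatrix' B)).trans
      (toQuadraticMap_toBilin _ _)
  rw [toForm, hB]
  exact ⟨Q.isometryEquivBasisRepr _⟩

end QF

section WittEquivalence

variable {k V₁ V₂ V₃ V₄ : Type*} [Field k]
  [AddCommGroup V₁] [Module k V₁] [AddCommGroup V₂] [Module k V₂]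
  [AddCommGroup V₃] [Module k V₃] [AddCommGroup V₄] [Module k V₄]
  {Q₁ : QuadraticForm k V₁} {Q₂ : QuadraticForm k V₂} {Q₃ : QuadraticForm k V₃}
  {Q₄ : QuadraticForm k V₄}

theorem neg_prod (Q₁ : QuadraticForm k V₁) (Q₂ : QuadraticForm k V₂) :
    -(Q₁.prod Q₂) = (-Q₁).prod (-Q₂) := by
  ext x
  simp [add_comm]

theorem smul_prod (c : k) (Q₁ : QuadraticForm k V₁) (Q₂ : QuadraticForm k V₂) :
    c • Q₁.prod Q₂ = (c • Q₁).prod (c • Q₂) := by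
  ext x
  simp [mul_add]

theorem equivalent_neg (h : Q₁.Equivalent Q₂) : (-Q₁).Equivalent (-Q₂) := by
  obtain ⟨e⟩ := h
  exact ⟨⟨e.toLinearEquiv, fun x ↦ congr_arg Neg.neg (e.map_app x)⟩⟩

theorem equivalent_smul (c : k) (h : Q₁.Equivalent Q₂) : (c • Q₁).Equivalent (c • Q₂) := by
  obtain ⟨e⟩ := h
  exact ⟨⟨e.toLinearEquiv, fun x ↦ congr_arg (c • ·) (e.map_app x)⟩⟩

theorem prod_assoc_equivalent (Q₁ : QuadraticForm k V₁) (Q₂ : QuadraticForm k V₂)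
    (Q₃ : QuadraticForm k V₃) : ((Q₁.prod Q₂).prod Q₃).Equivalent (Q₁.prod (Q₂.prod Q₃)) :=
  ⟨⟨LinearEquiv.prodAssoc k V₁ V₂ V₃, fun x ↦ by simp [add_assoc]⟩⟩

/-- Witt equivalence of quadratic forms of arbitrary dimensions: their difference is metabolic. -/
def WittRel (Q₁ : QuadraticForm k V₁) (Q₂ : QuadraticForm k V₂) : Prop :=
  IsMetabolic (Q₁.prod (-Q₂))

namespace WittRel

theorem of_equivalent (hQ : IsNonsingular Q₁) (h : Q₁.Equivalent Q₂) : WittRel Q₁ Q₂ :=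
  hQ.isMetabolic_prod_neg.of_equivalent ((Equivalent.refl _).prod (equivalent_neg h))

theorem prod_of_isMetabolic (h : IsMetabolic Q₁) (hQ : IsNonsingular Q₂) :
    WittRel (Q₁.prod Q₂) Q₂ :=
  (h.prod hQ.isMetabolic_prod_neg).of_equivalent (prod_assoc_equivalent _ _ _).symm

theorem symm (h : WittRel Q₁ Q₂) : WittRel Q₂ Q₁ := by
  have := h.neg
  rw [neg_prod, neg_neg] at this
  exact this.of_equivalent ⟨IsometryEquiv.prodComm _ _⟩

theorem prod (h₁ : WittRel Q₁ Q₂) (h₂ : WittRel Q₃ Q₄) : WittRel (Q₁.prod Q₃) (Q₂.prod Q₄) := by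
  rw [WittRel, neg_prod]
  exact (IsMetabolic.prod h₁ h₂).of_equivalent ⟨IsometryEquiv.prodProdProdComm _ _ _ _⟩

theorem trans [FiniteDimensional k V₂] (hQ : IsNonsingular Q₂) (h₁ : WittRel Q₁ Q₂)
    (h₂ : WittRel Q₂ Q₃) : WittRel Q₁ Q₃ := by
  have h : IsMetabolic ((Q₁.prod (-Q₃)).prod ((-Q₂).prod Q₂)) :=
    (IsMetabolic.prod h₁ (IsMetabolic.of_equivalent h₂ ⟨IsometryEquiv.prodComm _ _⟩)).of_equivalent
      ⟨IsometryEquiv.prodProdProdComm Q₁ (-Q₂) (-Q₃) Q₂⟩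
  exact h.cancel (hQ.isMetabolic_prod_neg.of_equivalent ⟨IsometryEquiv.prodComm Q₂ (-Q₂)⟩)

theorem neg (h : WittRel Q₁ Q₂) : WittRel (-Q₁) (-Q₂) := by
  rw [WittRel, ← neg_prod]
  exact IsMetabolic.neg h

end WittRel

end WittEquivalence

open QF in
/-- Witt equivalence of nonsingular coefficient matrices. -/
def wittSetoid (F : Type*) [Field F] : Setoid {q : QF F // IsNonsingular q.toForm} where
  r q q' := WittRel q.1.toForm q'.1.toForm
  iseqv :=
    { refl := fun q ↦ q.2.isMetabolic_prod_neg
      symm := WittRel.symm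
      trans := fun {_ q _} h h' ↦ h.trans q.2 h' }

/-- The Witt group `W_q(F)` of nonsingular quadratic forms. Coefficient matrices serve as a small
set of representatives. -/
def WittGroup (F : Type*) [Field F] : Type _ := Quotient (wittSetoid F)

section WittGroup

variable {F V V₁ V₂ : Type*} [Field F]
  [AddCommGroup V] [Module F V] [FiniteDimensional F V]
  [AddCommGroup V₁] [Module F V₁] [FiniteDimensional F V₁]
  [AddCommGroup V₂] [Module F V₂] [FiniteDimensional F V₂]

/-- The class in `W_q(F)` of a nonsingular form on a finite-dimensional space. -/
noncomputable def wittClass (Q : QuadraticForm F V) (hQ : IsNonsingular Q) : WittGroup F :=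
  let h := QF.exists_toForm_equivalent Q
  Quotient.mk (wittSetoid F) ⟨h.choose, hQ.of_equivalent h.choose_spec⟩

theorem wittClass_eq_iff {Q₁ : QuadraticForm F V₁} {Q₂ : QuadraticForm F V₂}
    {h₁ : IsNonsingular Q₁} {h₂ : IsNonsingular Q₂} :
    wittClass Q₁ h₁ = wittClass Q₂ h₂ ↔ WittRel Q₁ Q₂ := by
  have e₁ := (QF.exists_toForm_equivalent Q₁).choose_spec
  have e₂ := (QF.exists_toForm_equivalent Q₂).choose_spec
  refine Quotient.eq.trans ⟨fun h ↦ ?_, fun h ↦ ?_⟩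
  · exact IsMetabolic.of_equivalent h (e₁.symm.prod (equivalent_neg e₂.symm))
  · exact IsMetabolic.of_equivalent h (e₁.prod (equivalent_neg e₂))

theorem wittClass_congr {Q₁ : QuadraticForm F V₁} {Q₂ : QuadraticForm F V₂}
    {h₁ : IsNonsingular Q₁} {h₂ : IsNonsingular Q₂} (h : Q₁.Equivalent Q₂) :
    wittClass Q₁ h₁ = wittClass Q₂ h₂ :=
  wittClass_eq_iff.2 (.of_equivalent h₁ h)

theorem mk_eq_wittClass (q : {q : QF F // IsNonsingular q.toForm}) :
    Quotient.mk (wittSetoid F) q = wittClass q.1.toForm q.2 :=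
  Quotient.sound (WittRel.of_equivalent q.2 (QF.exists_toForm_equivalent _).choose_spec)

namespace WittGroup

theorem exists_wittClass_eq (w : WittGroup F) :
    ∃ (q : QF F) (hq : IsNonsingular q.toForm), wittClass q.toForm hq = w := by
  induction w using Quotient.inductionOn with
  | h q => exact ⟨q.1, q.2, (mk_eq_wittClass q).symm⟩

noncomputable instance : Zero (WittGroup F) :=
  ⟨wittClass (0 : QuadraticForm F PUnit) fun _ _ ↦ rfl⟩

noncomputable instance : Add (WittGroup F) where
  add := Quotient.lift₂ (fun q q' ↦ wittClass _ (q.2.prod q'.2))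
    fun _ _ _ _ h h' ↦ wittClass_eq_iff.2 (h.prod h')

noncomputable instance : Neg (WittGroup F) where
  neg := Quotient.lift (fun q ↦ wittClass _ q.2.neg) fun _ _ h ↦ wittClass_eq_iff.2 h.neg

end WittGroup

theorem wittClass_prod {Q₁ : QuadraticForm F V₁} {Q₂ : QuadraticForm F V₂}
    (h₁ : IsNonsingular Q₁) (h₂ : IsNonsingular Q₂) :
    wittClass (Q₁.prod Q₂) (h₁.prod h₂) = wittClass Q₁ h₁ + wittClass Q₂ h₂ :=
  have e₁ := (QF.exists_toForm_equivalent Q₁).choose_spec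
  have e₂ := (QF.exists_toForm_equivalent Q₂).choose_spec
  wittClass_congr (h₂ := (h₁.of_equivalent e₁).prod (h₂.of_equivalent e₂)) (e₁.prod e₂)

theorem wittClass_neg {Q : QuadraticForm F V} (hQ : IsNonsingular Q) :
    wittClass (-Q) hQ.neg = -wittClass Q hQ :=
  have e := (QF.exists_toForm_equivalent Q).choose_spec
  wittClass_congr (h₂ := (hQ.of_equivalent e).neg) (equivalent_neg e)

theorem wittClass_eq_zero_iff {Q : QuadraticForm F V} {hQ : IsNonsingular Q} :
    wittClass Q hQ = 0 ↔ IsMetabolic Q :=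
  wittClass_eq_iff.trans
    ⟨fun h ↦ h.cancel (.of_subsingleton _), fun h ↦ h.prod (.of_subsingleton _)⟩

theorem wittClass_orthSum {q q' : QF F} (hq : IsNonsingular q.toForm)
    (hq' : IsNonsingular q'.toForm) (hs : IsNonsingular (q.orthSum q').toForm) :
    wittClass (q.orthSum q').toForm hs = wittClass q.toForm hq + wittClass q'.toForm hq' := by
  rw [← wittClass_prod]
  exact wittClass_congr (QF.prod_equivalent_orthSum q q').symm

namespace WittGroup

noncomputable instance : AddCommGroup (WittGroup F) :=
  { AddGroup.ofLeftAxioms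
      (fun w₁ w₂ w₃ ↦ by
        obtain ⟨q₁, h₁, rfl⟩ := w₁.exists_wittClass_eq
        obtain ⟨q₂, h₂, rfl⟩ := w₂.exists_wittClass_eq
        obtain ⟨q₃, h₃, rfl⟩ := w₃.exists_wittClass_eq
        simp only [← wittClass_prod]
        exact wittClass_congr (prod_assoc_equivalent _ _ _))
      (fun w ↦ by
        obtain ⟨q, hq, rfl⟩ := w.exists_wittClass_eq
        exact (wittClass_prod _ hq).symm.trans
          (wittClass_eq_iff.2 (.prod_of_isMetabolic (.of_subsingleton _) hq)))
      (fun w ↦ by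
        obtain ⟨q, hq, rfl⟩ := w.exists_wittClass_eq
        rw [← wittClass_neg, ← wittClass_prod, wittClass_eq_zero_iff]
        exact hq.isMetabolic_prod_neg.of_equivalent ⟨IsometryEquiv.prodComm _ _⟩) with
    add_comm := fun w₁ w₂ ↦ by
      obtain ⟨q₁, h₁, rfl⟩ := w₁.exists_wittClass_eq
      obtain ⟨q₂, h₂, rfl⟩ := w₂.exists_wittClass_eq
      simp only [← wittClass_prod]
      exact wittClass_congr ⟨IsometryEquiv.prodComm _ _⟩ }

section Lift

variable {A : Type*} [AddCommGroup A] (g : ∀ q : QF F, IsNonsingular q.toForm → A)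
  (hadd : ∀ q q' hq hq' hs, g (q.orthSum q') hs = g q hq + g q' hq')
  (hmet : ∀ q hq, IsMetabolic q.toForm → g q hq = 0)

include hadd hmet in
theorem eq_of_wittRel {q q' : QF F} (hq : IsNonsingular q.toForm) (hq' : IsNonsingular q'.toForm)
    (h : WittRel q.toForm q'.toForm) : g q hq = g q' hq' := by
  have e : (-q'.toForm).Equivalent (QF.smul (-1) q').toForm :=
    neg_one_smul F q'.toForm ▸ QF.smul_equivalent_toForm (-1) q'
  have hneg := hq'.neg.of_equivalent e
  have hzero {p : QF F} (hp : IsNonsingular p.toForm) (h : WittRel p.toForm q'.toForm) :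
      g p hp + g _ hneg = 0 := by
    have e' := ((Equivalent.refl p.toForm).prod e).trans (QF.prod_equivalent_orthSum p _)
    rw [← hadd p _ hp hneg ((hp.prod hq'.neg).of_equivalent e')]
    exact hmet _ _ (IsMetabolic.of_equivalent h e')
  exact add_right_cancel ((hzero hq h).trans (hzero hq' hq'.isMetabolic_prod_neg).symm)

/-- The universal property of the Witt group: a function on nonsingular forms that is additive and
kills metabolic forms factors through Witt classes. -/
noncomputable def lift : WittGroup F →+ A :=
  AddMonoidHom.mk'
    (Quotient.lift (fun q ↦ g q.1 q.2) fun q q' h ↦ eq_of_wittRel g hadd hmet q.2 q'.2 h)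
    fun w w' ↦ by
      obtain ⟨q, hq, rfl⟩ := w.exists_wittClass_eq
      obtain ⟨q', hq', rfl⟩ := w'.exists_wittClass_eq
      have hs := (hq.prod hq').of_equivalent (QF.prod_equivalent_orthSum q q')
      rw [← wittClass_orthSum hq hq' hs, ← mk_eq_wittClass ⟨q, hq⟩, ← mk_eq_wittClass ⟨q', hq'⟩,
        ← mk_eq_wittClass ⟨_, hs⟩]
      exact hadd q q' hq hq' hs

theorem lift_wittClass_toForm (q : QF F) (hq : IsNonsingular q.toForm) :
    lift g hadd hmet (wittClass q.toForm hq) = g q hq := by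
  rw [← mk_eq_wittClass ⟨q, hq⟩]
  rfl

end Lift

/-- Scaling of forms by a unit. -/
noncomputable def scale (u : Fˣ) : WittGroup F →+ WittGroup F :=
  lift (fun q hq ↦ wittClass (u.1 • q.toForm) (hq.smul u.ne_zero))
    (fun q q' h h' hs ↦ by
      rw [← wittClass_prod]
      refine wittClass_congr ?_
      rw [← smul_prod]
      exact equivalent_smul u.1 (QF.prod_equivalent_orthSum q q').symm)
    fun q hq h ↦ wittClass_eq_zero_iff.2 (h.smul u.ne_zero)

theorem scale_wittClass (u : Fˣ) {Q : QuadraticForm F V} (hQ : IsNonsingular Q) :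
    scale u (wittClass Q hQ) = wittClass (u.1 • Q) (hQ.smul u.ne_zero) := by
  obtain ⟨q, e⟩ := QF.exists_toForm_equivalent Q
  rw [wittClass_congr (h₂ := hQ.of_equivalent e) e, scale, lift_wittClass_toForm]
  exact wittClass_congr (equivalent_smul u.1 e.symm)

end WittGroup

theorem wittClass_pi {n : ℕ} {R : Fin n → QuadraticForm F V} (hR : ∀ i, IsNonsingular (R i)) :
    wittClass (QuadraticMap.pi R) (.pi hR) = ∑ i, wittClass (R i) (hR i) := by
  induction n with
  | zero => exact wittClass_eq_zero_iff.2 (.of_subsingleton _)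
  | succ n ih =>
    rw [Fin.sum_univ_succ, ← ih fun i ↦ hR i.succ, ← wittClass_prod]
    exact wittClass_congr (pi_fin_succ_equivalent R).symm

end WittGroup

section Symbol

theorem IsMetabolic.of_range {k V₁ V : Type*} [Field k] [AddCommGroup V₁] [Module k V₁]
    [AddCommGroup V] [Module k V] {Q : QuadraticForm k V} (φ : V₁ →ₗ[k] V)
    (hφ : ∀ x, Q (φ x) = 0) (horth : ∀ z, (∀ x, polar Q z (φ x) = 0) → ∃ x, φ x = z) :
    IsMetabolic Q :=
  ⟨LinearMap.range φ, by rintro _ ⟨x, rfl⟩; exact hφ x, fun z hz ↦ horth z fun x ↦ hz _ ⟨x, rfl⟩⟩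

variable {F K A : Type*} [Field F] [Field K] [AddCommGroup A]

/-- The relations of the symbols `[a, b]` that enter the computation of Witt kernels. In the
application `sq` is the Frobenius of `K`, whose values lie in the subfield `F`. -/
structure IsWittSymbol (sq : K →+* F) (s : F →+ F →+ A) : Prop where
  symm (a b : F) : s a b = s b a
  artinSchreier (b c : F) : s (c + b * c ^ 2) b = 0
  sq_mul (z : K) (a b : F) : s (sq z * a) b = s a (sq z * b)

section CharTwo

variable [CharP F 2]

theorem WittGroup.add_self (w : WittGroup F) : w + w = 0 := by
  obtain ⟨q, hq, rfl⟩ := w.exists_wittClass_eq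
  rw [← wittClass_prod, wittClass_eq_zero_iff]
  simpa only [neg_eq_self_charTwo] using hq.isMetabolic_prod_neg

theorem wittClass_binForm_add_right (a b b' : F) :
    wittClass (binForm a (b + b')) (isNonsingular_binForm a (b + b')) =
      wittClass (binForm a b) (isNonsingular_binForm a b) +
        wittClass (binForm a b') (isNonsingular_binForm a b') := by
  rw [← wittClass_prod, wittClass_eq_iff, WittRel, neg_eq_self_charTwo]
  let φ : F × F × F →ₗ[F] (F × F) × (F × F) × F × F :=
    { toFun := fun u ↦ ((u.1 + u.2.1, u.2.2), (u.1, u.2.2), (u.2.1, u.2.2))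
      map_add' := fun u v ↦ by ext <;> simp [add_add_add_comm]
      map_smul' := fun c u ↦ by ext <;> simp [mul_add] }
  refine .of_range φ (fun u ↦ ?_) fun z hz ↦ ?_
  · simp only [φ, LinearMap.coe_mk, AddHom.coe_mk, prod_apply, binForm_apply]
    linear_combination
      (a * (u.1 ^ 2 + u.1 * u.2.1 + u.2.1 ^ 2) + u.1 * u.2.2 + u.2.1 * u.2.2 +
        (b + b') * u.2.2 ^ 2) * CharTwo.two_eq_zero (R := F)
  · have h₁ : z.1.2 = z.2.1.2 := CharTwo.add_eq_zero.1 (by simpa [φ] using hz (1, 0, 0))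
    have h₂ : z.1.2 = z.2.2.2 := CharTwo.add_eq_zero.1 (by simpa [φ] using hz (0, 1, 0))
    have h₃ : z.1.1 = z.2.1.1 + z.2.2.1 := CharTwo.add_eq_zero.1 (by simpa [φ] using hz (0, 0, 1))
    exact ⟨(z.2.1.1, z.2.2.1, z.1.2), by ext <;> simp [φ, h₁.symm, h₂.symm, h₃]⟩

theorem wittClass_binForm_comm (a b : F) :
    wittClass (binForm a b) (isNonsingular_binForm a b) =
      wittClass (binForm b a) (isNonsingular_binForm b a) :=
  wittClass_congr ⟨⟨LinearEquiv.prodComm F F F, fun x ↦ by simp; ring⟩⟩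

/-- The symbol `(a, b) ↦ [a, b]` with values in the Witt group. -/
noncomputable def wittSymbol : F →+ F →+ WittGroup F :=
  AddMonoidHom.mk' (fun a ↦ AddMonoidHom.mk' (fun b ↦ wittClass _ (isNonsingular_binForm a b))
    (wittClass_binForm_add_right a)) fun a a' ↦ AddMonoidHom.ext fun b ↦ by
      have h := wittClass_binForm_add_right b a a'
      simp only [wittClass_binForm_comm b] at h
      exact h

theorem wittSymbol_apply (a b : F) :
    wittSymbol a b = wittClass (binForm a b) (isNonsingular_binForm a b) := rfl

theorem WittGroup.scale_wittSymbol (u : Fˣ) (a b : F) :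
    scale u (wittSymbol a (u * b)) = wittSymbol (u * a) b := by
  rw [wittSymbol_apply, scale_wittClass]
  refine wittClass_congr (h₂ := isNonsingular_binForm _ b)
    ⟨⟨(LinearEquiv.refl F F).prodCongr (LinearEquiv.smulOfNeZero F F u.1 u.ne_zero), fun x ↦ ?_⟩⟩
  simp
  ring

theorem WittGroup.exists_eq_sum_wittSymbol (w : WittGroup F) :
    ∃ (n : ℕ) (a b : Fin n → F), w = ∑ i, wittSymbol (a i) (b i) := by
  obtain ⟨q, hq, rfl⟩ := w.exists_wittClass_eq
  obtain ⟨n, a, b, e⟩ := hq.exists_equivalent_pi_binForm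
  refine ⟨n, a, b, ?_⟩
  simp only [wittSymbol_apply, ← wittClass_pi fun i ↦ isNonsingular_binForm (a i) (b i)]
  exact wittClass_congr e

theorem isWittSymbol_wittSymbol : IsWittSymbol (frobenius F 2) (wittSymbol (F := F)) where
  symm := wittClass_binForm_comm
  artinSchreier b c := by
    rw [wittSymbol_apply, wittClass_eq_zero_iff]
    refine .of_range (LinearMap.id.prod (LinearMap.toSpanSingleton F F c)) (fun u ↦ ?_)
      fun z hz ↦ ?_
    · simp only [LinearMap.prod_apply, Function.prod, LinearMap.id_apply,
        LinearMap.toSpanSingleton_apply, smul_eq_mul, binForm_apply]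
      linear_combination (c * u ^ 2 + b * c ^ 2 * u ^ 2) * CharTwo.two_eq_zero (R := F)
    · have h : z.1 * c = z.2 := CharTwo.add_eq_zero.1 (by simpa using hz 1)
      exact ⟨z.1, by ext <;> simp [h]⟩
  sq_mul c a b := by
    rw [wittSymbol_apply, wittSymbol_apply, wittClass_eq_iff, WittRel, neg_eq_self_charTwo]
    let m : F →ₗ[F] F := LinearMap.toSpanSingleton F F c
    refine .of_range ((LinearMap.id.prodMap m).prod (m.prodMap LinearMap.id)) (fun u ↦ ?_)
      fun z hz ↦ ?_
    · simp only [m, LinearMap.prod_apply, Function.prod, LinearMap.prodMap_apply,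
        LinearMap.id_apply, LinearMap.toSpanSingleton_apply, smul_eq_mul, prod_apply,
        binForm_apply, frobenius_def]
      linear_combination (a * c ^ 2 * u.1 ^ 2 + c * u.1 * u.2 + b * c ^ 2 * u.2 ^ 2) *
        CharTwo.two_eq_zero (R := F)
    · have h₁ : z.1.2 = z.2.2 * c := CharTwo.add_eq_zero.1 (by simpa [m] using hz (1, 0))
      have h₂ : z.1.1 * c = z.2.1 := CharTwo.add_eq_zero.1 (by simpa [m] using hz (0, 1))
      exact ⟨(z.1.1, z.2.2), by ext <;> simp [m, h₁, h₂]⟩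

end CharTwo

namespace IsWittSymbol

variable [CharP K 2] {sq : K →+* F} {s : F →+ F →+ A} {f : F →+* K}

theorem comp_wittSymbol (hsq : ∀ z, f (sq z) = z ^ 2) :
    IsWittSymbol sq
      (((wittSymbol (F := K)).compl₂ (f : F →+ K)).comp (f : F →+ K)) where
  symm a b := isWittSymbol_wittSymbol.symm _ _
  artinSchreier b c := by simpa using isWittSymbol_wittSymbol.artinSchreier (f b) (f c)
  sq_mul z a b := by
    simpa [hsq, frobenius_def] using isWittSymbol_wittSymbol.sq_mul z (f a) (f b)

/-- The coefficient `c = y + ∑ xᵢ yᵢ` lies in `F`, and collecting all terms with the common slot `b`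
leaves the Artin-Schreier symbol of `c`. -/
theorem add_sum_eq (hs : IsWittSymbol sq s) (hsq : ∀ z, f (sq z) = z ^ 2) {ι : Type*} [Fintype ι]
    {a b : F} {a' b' : ι → F} {y : K} {x' y' : ι → K}
    (h : f a + y + f b * y ^ 2 +
      ∑ i, (f (a' i) * x' i ^ 2 + x' i * y' i + f (b' i) * y' i ^ 2) = 0) :
    s a b + ∑ i, s (a' i) (b' i) = ∑ i, s (a' i + b * sq (y' i)) (b' i + b * sq (x' i)) := by
  have : CharP F 2 := (f.charP_iff f.injective 2).2 ‹_›
  let c := a + b * sq y + ∑ i, (a' i * sq (x' i) + b' i * sq (y' i))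
  have hc : f c = y + ∑ i, x' i * y' i := by
    rw [← CharTwo.add_eq_zero, ← h]
    simp only [c, map_add, map_mul, map_sum, hsq, Finset.sum_add_distrib]
    ring
  have hcc : c ^ 2 = sq y + ∑ i, sq (y' i) * sq (x' i) := f.injective <| by
    simp only [map_pow, hc, CharTwo.add_sq, CharTwo.sum_sq, mul_pow, map_add, map_sum, map_mul,
      hsq, mul_comm]
  have hAS : a + ∑ i, (a' i * sq (x' i) + (b' i * sq (y' i) + b * sq (y' i) * sq (x' i))) =
      c + b * c ^ 2 := by
    rw [hcc]
    simp only [c, Finset.sum_add_distrib, mul_assoc, ← Finset.mul_sum]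
    linear_combination -(b * sq y) * CharTwo.two_eq_zero (R := F)
  have hmul (u : F) (z : K) : s u (b * sq z) = s (u * sq z) b := by
    rw [mul_comm b, ← hs.sq_mul, mul_comm]
  have hexpand (i : ι) : s (a' i + b * sq (y' i)) (b' i + b * sq (x' i)) = s (a' i) (b' i) +
      s (a' i * sq (x' i) + (b' i * sq (y' i) + b * sq (y' i) * sq (x' i))) b := by
    simp only [map_add, AddMonoidHom.add_apply, hs.symm (b * _) (b' i), hmul]
    abel
  have hzero : s a b +
      ∑ i, s (a' i * sq (x' i) + (b' i * sq (y' i) + b * sq (y' i) * sq (x' i))) b = 0 := by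
    rw [← hs.artinSchreier b c, ← hAS, map_add, map_sum, AddMonoidHom.add_apply,
      AddMonoidHom.finsetSum_apply]
  have hself : s a b + s a b = 0 := by rw [← map_add, CharTwo.add_self_eq_zero, map_zero]
  simp only [hexpand, Finset.sum_add_distrib, add_left_cancel (hzero.trans hself.symm), add_comm]

theorem sum_eq_zero_of_add (hs : IsWittSymbol sq s) (hsq : ∀ z, f (sq z) = z ^ 2)
    {n : ℕ}
    (ih : ∀ a b : Fin n → F, ∑ i, wittSymbol (f (a i)) (f (b i)) = 0 → ∑ i, s (a i) (b i) = 0)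
    {a b : F} {a' b' : Fin n → F} {x y : K} {v : Fin n → K × K} (hx : x ≠ 0)
    (hv : f a * x ^ 2 + x * y + f b * y ^ 2 + ∑ i, binForm (f (a' i)) (f (b' i)) (v i) = 0)
    (h : wittSymbol (f a) (f b) + ∑ i, wittSymbol (f (a' i)) (f (b' i)) = 0) :
    s a b + ∑ i, s (a' i) (b' i) = 0 := by
  have hv' : f a + y / x + f b * (y / x) ^ 2 + ∑ i, (f (a' i) * ((v i).1 / x) ^ 2 +
      (v i).1 / x * ((v i).2 / x) + f (b' i) * ((v i).2 / x) ^ 2) = 0 := by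
    have hscale (i : Fin n) : f (a' i) * ((v i).1 / x) ^ 2 + (v i).1 / x * ((v i).2 / x) +
        f (b' i) * ((v i).2 / x) ^ 2 = binForm (f (a' i)) (f (b' i)) (v i) / x ^ 2 := by
      rw [binForm_apply]
      ring
    simp only [hscale, ← Finset.sum_div]
    rw [← zero_div (x ^ 2), ← hv]
    field_simp
  rw [hs.add_sum_eq hsq hv']
  refine ih _ _ ?_
  rw [← h]
  exact ((comp_wittSymbol hsq).add_sum_eq hsq hv').symm

theorem sum_eq_zero (hs : IsWittSymbol sq s) (hsq : ∀ z, f (sq z) = z ^ 2) {n : ℕ}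
    (a b : Fin n → F) (h : ∑ i, wittSymbol (f (a i)) (f (b i)) = 0) :
    ∑ i, s (a i) (b i) = 0 := by
  induction n with
  | zero => simp
  | succ n ih =>
    obtain ⟨v, hv, hQv⟩ : ∃ v, v ≠ 0 ∧
        QuadraticMap.pi (fun i ↦ binForm (f (a i)) (f (b i))) v = 0 := by
      have hclass := wittClass_pi fun i ↦ isNonsingular_binForm (f (a i)) (f (b i))
      exact (wittClass_eq_zero_iff.1 (hclass.trans h)).exists_isotropic
    obtain ⟨j, hj⟩ := Function.ne_iff.1 hv
    rw [pi_apply, Fin.sum_univ_succAbove _ j, binForm_apply] at hQv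
    rw [Fin.sum_univ_succAbove _ j] at h ⊢
    by_cases hx : (v j).1 = 0
    · have hy : (v j).2 ≠ 0 := fun hy ↦ hj (Prod.ext hx hy)
      rw [hs.symm]
      have hQv' : f (b j) * (v j).2 ^ 2 + (v j).2 * (v j).1 + f (a j) * (v j).1 ^ 2 +
          ∑ i, binForm (f (a (j.succAbove i))) (f (b (j.succAbove i))) (v (j.succAbove i)) = 0 := by
        rw [← hQv]
        ring
      rw [isWittSymbol_wittSymbol.symm] at h
      exact hs.sum_eq_zero_of_add hsq ih hy hQv' h
    · exact hs.sum_eq_zero_of_add hsq ih hx hQv h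

end IsWittSymbol
end Symbol

section BaseChange

variable {F K : Type*} [Field F] [Field K]

namespace QF

theorem map_orthSum (f : F →+* K) (q q' : QF F) :
    (q.orthSum q').map f = (q.map f).orthSum (q'.map f) := by
  have h : (Matrix.fromBlocks q.c 0 0 q'.c).map f =
      Matrix.fromBlocks (q.c.map f) 0 0 (q'.c.map f) := by
    rw [Matrix.fromBlocks_map, Matrix.map_zero f (_root_.map_zero f),
      Matrix.map_zero f (_root_.map_zero f)]
  exact congr_arg (fun M ↦ QF.mk (q.dim + q'.dim)
    (Matrix.reindex finSumFinEquiv finSumFinEquiv M)) h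

theorem map_smul (f : F →+* K) (a : F) (q : QF F) :
    (smul a q).map f = smul (f a) (q.map f) :=
  congr_arg (QF.mk q.dim) (Matrix.ext fun _ _ ↦ map_mul f _ _)

theorem map_bin (f : F →+* K) (a b : F) : (bin a b).map f = bin (f a) (f b) := by
  refine congr_arg (QF.mk 2) (Matrix.ext fun i j ↦ ?_)
  fin_cases i <;> fin_cases j <;> simp [bin]

variable [Algebra F K] {q : QF F}

theorem isNonsingular_map (hq : IsNonsingular q.toForm) :
    IsNonsingular (q.map (algebraMap F K)).toForm :=
  hq.toQuadraticForm'_map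

theorem isMetabolic_map (hq : IsMetabolic q.toForm) :
    IsMetabolic (q.map (algebraMap F K)).toForm :=
  hq.toQuadraticForm'_map

end QF

theorem wittClass_toForm_congr {q q' : QF F} (h : q = q') {hq : IsNonsingular q.toForm} :
    wittClass q.toForm hq = wittClass q'.toForm (h ▸ hq) := by
  subst h
  rfl

namespace WittGroup

theorem scale_sq (x : Fˣ) (w : WittGroup F) : scale (x ^ 2) w = w := by
  obtain ⟨q, hq, rfl⟩ := w.exists_wittClass_eq
  rw [scale_wittClass]
  refine wittClass_congr ⟨⟨LinearEquiv.smulOfUnit x, fun v ↦ ?_⟩⟩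
  change q.toForm (x.1 • v) = (x ^ 2).1 • q.toForm v
  rw [QuadraticMap.map_smul, Units.val_pow_eq_pow_val, pow_two]

variable (K) [Algebra F K]

/-- The restriction homomorphism `W_q(F) → W_q(K)`. -/
noncomputable def baseChange : WittGroup F →+ WittGroup K :=
  lift (fun q hq ↦ wittClass (q.map (algebraMap F K)).toForm (QF.isNonsingular_map hq))
    (fun q q' _ _ _ ↦ (wittClass_toForm_congr (QF.map_orthSum _ q q')).trans
      (wittClass_orthSum _ _ _))
    fun _ _ h ↦ wittClass_eq_zero_iff.2 (QF.isMetabolic_map h)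

theorem baseChange_wittClass_toForm {q : QF F} (hq : IsNonsingular q.toForm) :
    baseChange K (wittClass q.toForm hq) =
      wittClass (q.map (algebraMap F K)).toForm (QF.isNonsingular_map hq) :=
  lift_wittClass_toForm _ _ _ q hq

theorem baseChange_scale (u : Fˣ) (w : WittGroup F) :
    baseChange K (scale u w) =
      scale (Units.map (algebraMap F K).toMonoidHom u) (baseChange K w) := by
  obtain ⟨q, hq, rfl⟩ := w.exists_wittClass_eq
  have e := QF.smul_equivalent_toForm u.1 q
  rw [scale_wittClass, wittClass_congr (h₂ := (hq.smul u.ne_zero).of_equivalent e) e,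
    baseChange_wittClass_toForm, baseChange_wittClass_toForm, scale_wittClass,
    wittClass_toForm_congr (QF.map_smul _ u.1 q)]
  exact wittClass_congr (QF.smul_equivalent_toForm _ _).symm

theorem baseChange_wittSymbol [CharP F 2] [CharP K 2] (a b : F) :
    baseChange K (wittSymbol a b) = wittSymbol (algebraMap F K a) (algebraMap F K b) := by
  have e := QF.binForm_equivalent_toForm a b
  rw [wittSymbol_apply, wittClass_congr (h₂ := (isNonsingular_binForm a b).of_equivalent e) e,
    baseChange_wittClass_toForm, wittClass_toForm_congr (QF.map_bin _ a b),
    wittSymbol_apply]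
  exact wittClass_congr (QF.binForm_equivalent_toForm _ _).symm

end WittGroup
end BaseChange

section WittKernel

variable {F K : Type*} [Field F]

/-- The subgroup `Σ_{t ∈ T} ⟨1, t⟩_b ⊗ W_q(F)` of the Witt group, where `⟨1, t⟩_b ⊗ w = w + t w`. -/
noncomputable def pfisterSum (T : Set F) : AddSubgroup (WittGroup F) :=
  AddSubgroup.closure {w | ∃ u : Fˣ, ↑u ∈ T ∧ ∃ v, w = v + WittGroup.scale u v}

variable {T : Set F}

theorem add_scale_mem_pfisterSum {u : Fˣ} (hu : ↑u ∈ T) (w : WittGroup F) :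
    w + WittGroup.scale u w ∈ pfisterSum T :=
  AddSubgroup.subset_closure ⟨u, hu, w, rfl⟩

theorem mk_scale_eq_mk [CharP F 2] {u : Fˣ} (hu : ↑u ∈ T) (w : WittGroup F) :
    (QuotientAddGroup.mk (WittGroup.scale u w) : WittGroup F ⧸ pfisterSum T) = w := by
  rw [QuotientAddGroup.eq, neg_eq_of_add_eq_zero_left (WittGroup.add_self _), add_comm]
  exact add_scale_mem_pfisterSum hu w

variable [Field K] [Algebra F K] [CharP F 2]

theorem sq_mem_range_algebraMap
    (hgen : Algebra.adjoin F {x : K | ∃ t ∈ T, x ^ 2 = algebraMap F K t} = ⊤) (z : K) :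
    z ^ 2 ∈ (algebraMap F K).range := by
  have : CharP K 2 := charP_of_injective_algebraMap (algebraMap F K).injective 2
  have hz : z ∈ Algebra.adjoin F {x : K | ∃ t ∈ T, x ^ 2 = algebraMap F K t} :=
    hgen ▸ Algebra.mem_top
  induction hz using Algebra.adjoin_induction with
  | mem x hx =>
    obtain ⟨t, -, ht⟩ := hx
    exact ⟨t, ht.symm⟩
  | algebraMap r => exact ⟨r ^ 2, map_pow _ _ _⟩
  | add x y _ _ hx hy =>
    rw [CharTwo.add_sq]
    exact add_mem hx hy
  | mul x y _ _ hx hy =>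
    rw [mul_pow]
    exact mul_mem hx hy

theorem exists_ringHom_algebraMap_eq_sq (h : ∀ z : K, z ^ 2 ∈ (algebraMap F K).range) :
    ∃ sq : K →+* F, ∀ z, algebraMap F K (sq z) = z ^ 2 := by
  have : CharP K 2 := charP_of_injective_algebraMap (algebraMap F K).injective 2
  choose sq hsq using h
  have hinj := (algebraMap F K).injective
  exact ⟨{ toFun := sq
           map_one' := hinj (by simp [hsq])
           map_mul' := fun x y ↦ hinj (by simp [hsq, mul_pow])
           map_zero' := hinj (by simp [hsq])
           map_add' := fun x y ↦ hinj (by simp [hsq, CharTwo.add_sq]) }, hsq⟩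

theorem isWittSymbol_mk_wittSymbol (h0 : (0 : F) ∉ T)
    (hgen : Algebra.adjoin F {x : K | ∃ t ∈ T, x ^ 2 = algebraMap F K t} = ⊤)
    {sq : K →+* F} (hsq : ∀ z, algebraMap F K (sq z) = z ^ 2) :
    IsWittSymbol sq
      ((AddMonoidHom.compHom (QuotientAddGroup.mk' (pfisterSum T))).comp wittSymbol) where
  symm a b := congr_arg QuotientAddGroup.mk (isWittSymbol_wittSymbol.symm a b)
  artinSchreier b c := congr_arg QuotientAddGroup.mk (isWittSymbol_wittSymbol.artinSchreier b c)
  sq_mul z := by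
    have hinj := (algebraMap F K).injective
    have hz : z ∈ Algebra.adjoin F {x : K | ∃ t ∈ T, x ^ 2 = algebraMap F K t} :=
      hgen ▸ Algebra.mem_top
    induction hz using Algebra.adjoin_induction with
    | mem x hx =>
      intro a b
      obtain ⟨t, ht, hxt⟩ := hx
      let u := Units.mk0 t (ne_of_mem_of_not_mem ht h0)
      rw [show sq x = u from hinj ((hsq x).trans hxt)]
      exact (congr_arg QuotientAddGroup.mk (WittGroup.scale_wittSymbol u a b).symm).trans
        (mk_scale_eq_mk ht _)
    | algebraMap r =>
      intro a b
      rw [show sq (algebraMap F K r) = r ^ 2 from hinj (by rw [hsq, map_pow])]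
      exact congr_arg QuotientAddGroup.mk (isWittSymbol_wittSymbol.sq_mul r a b)
    | add x y _ _ hx hy =>
      simp only [map_add, add_mul, AddMonoidHom.add_apply, hx, hy, implies_true]
    | mul x y _ _ hx hy => simp only [map_mul, mul_assoc, hx, hy, mul_left_comm, implies_true]

theorem pfisterSum_le_ker_baseChange (hroot : ∀ t ∈ T, ∃ x : K, x ^ 2 = algebraMap F K t) :
    pfisterSum T ≤ (WittGroup.baseChange K : WittGroup F →+ _).ker := by
  have : CharP K 2 := charP_of_injective_algebraMap (algebraMap F K).injective 2
  refine (AddSubgroup.closure_le _).2 ?_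
  rintro _ ⟨u, hu, v, rfl⟩
  obtain ⟨x, hx⟩ := hroot u hu
  have hx0 : x ≠ 0 := fun h ↦ u.ne_zero <| (map_eq_zero (algebraMap F K)).1 (by simp [← hx, h])
  have hux : Units.map (algebraMap F K).toMonoidHom u = Units.mk0 x hx0 ^ 2 :=
    Units.ext hx.symm
  rw [SetLike.mem_coe, AddMonoidHom.mem_ker, map_add, WittGroup.baseChange_scale, hux,
    WittGroup.scale_sq, WittGroup.add_self]

theorem ker_baseChange_eq_pfisterSum (h0 : (0 : F) ∉ T)
    (hroot : ∀ t ∈ T, ∃ x : K, x ^ 2 = algebraMap F K t)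
    (hgen : Algebra.adjoin F {x : K | ∃ t ∈ T, x ^ 2 = algebraMap F K t} = ⊤) :
    (WittGroup.baseChange K : WittGroup F →+ _).ker = pfisterSum T := by
  refine le_antisymm (fun w hw ↦ ?_) (pfisterSum_le_ker_baseChange hroot)
  have : CharP K 2 := charP_of_injective_algebraMap (algebraMap F K).injective 2
  obtain ⟨sq, hsq⟩ := exists_ringHom_algebraMap_eq_sq (sq_mem_range_algebraMap hgen)
  obtain ⟨n, a, b, rfl⟩ := w.exists_eq_sum_wittSymbol
  rw [AddMonoidHom.mem_ker, map_sum] at hw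
  simp only [WittGroup.baseChange_wittSymbol] at hw
  rw [← QuotientAddGroup.eq_zero_iff, ← QuotientAddGroup.mk'_apply, map_sum]
  exact (isWittSymbol_mk_wittSymbol h0 hgen hsq).sum_eq_zero hsq a b hw

end WittKernel

section Comparison

section Equivalences

variable {k V₁ V₂ V₃ V₄ : Type*} [Field k]
  [AddCommGroup V₁] [Module k V₁] [AddCommGroup V₂] [Module k V₂]
  [AddCommGroup V₃] [Module k V₃] [AddCommGroup V₄] [Module k V₄]
  {Q₁ : QuadraticForm k V₁} {Q₂ : QuadraticForm k V₂} {Q₃ : QuadraticForm k V₃}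
  {Q₄ : QuadraticForm k V₄}

theorem prod_right_comm_equivalent (Q₁ : QuadraticForm k V₁) (Q₂ : QuadraticForm k V₂)
    (Q₃ : QuadraticForm k V₃) : ((Q₁.prod Q₂).prod Q₃).Equivalent ((Q₁.prod Q₃).prod Q₂) :=
  (prod_assoc_equivalent Q₁ Q₂ Q₃).trans <|
    ((Equivalent.refl Q₁).prod ⟨IsometryEquiv.prodComm Q₂ Q₃⟩).trans
      (prod_assoc_equivalent Q₁ Q₃ Q₂).symm

theorem WittRel.of_equivalent_prod [FiniteDimensional k V₃] (h₂ : IsNonsingular Q₂)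
    (h₃ : IsMetabolic Q₃) (h₄ : IsMetabolic Q₄) (e : (Q₁.prod Q₃).Equivalent (Q₂.prod Q₄)) :
    WittRel Q₁ Q₂ := by
  have h : IsMetabolic ((Q₂.prod Q₄).prod (-Q₂)) :=
    (h₂.isMetabolic_prod_neg.prod h₄).of_equivalent (prod_right_comm_equivalent _ _ _)
  exact (h.of_equivalent <| (e.symm.prod (.refl (-Q₂))).trans
    (prod_right_comm_equivalent Q₁ Q₃ (-Q₂))).cancel h₃

theorem equivalent_prod_of_subsingleton [Subsingleton V₂] (Q₁ : QuadraticForm k V₁)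
    (Q₂ : QuadraticForm k V₂) : Q₁.Equivalent (Q₁.prod Q₂) :=
  have : Unique V₂ := uniqueOfSubsingleton 0
  ⟨⟨LinearEquiv.prodUnique.symm, fun x ↦ by simp [Subsingleton.elim (default : V₂) 0]⟩⟩

end Equivalences

variable {F : Type*} [Field F]

namespace QF

theorem isMetabolic_nil : IsMetabolic (nil : QF F).toForm :=
  @IsMetabolic.of_subsingleton F (Fin 0 → F) _ _ _ _ _

theorem isNonsingular_nil : IsNonsingular (nil : QF F).toForm :=
  fun x _ ↦ @Subsingleton.elim (Fin 0 → F) _ x 0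

theorem isMetabolic_hyp [CharP F 2] (n : ℕ) : IsMetabolic (hyp n : QF F).toForm := by
  induction n with
  | zero => exact isMetabolic_nil
  | succ n ih =>
    exact (((isMetabolic_binForm_zero_right 0).of_equivalent (binForm_equivalent_toForm 0 0)).prod
      ih).of_equivalent (prod_equivalent_orthSum _ _)

theorem pi_binForm_zero_equivalent_hyp (n : ℕ) :
    (QuadraticMap.pi fun _ : Fin n ↦ binForm (0 : F) 0).Equivalent (hyp n).toForm := by
  induction n with
  | zero => exact equivalent_of_subsingleton (V₂ := Fin 0 → F) _ _
  | succ n ih =>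
    exact (pi_fin_succ_equivalent _).symm.trans <|
      ((binForm_equivalent_toForm 0 0).prod ih).trans (prod_equivalent_orthSum _ _)

theorem exists_equivalent_hyp [CharP F 2] {V : Type*} [AddCommGroup V] [Module F V]
    [FiniteDimensional F V] {Q : QuadraticForm F V} (h : IsMetabolic Q) (hQ : IsNonsingular Q) :
    ∃ n, Q.Equivalent (hyp n).toForm :=
  let ⟨n, hn⟩ := h.exists_equivalent_pi_hyperbolic hQ
  ⟨n, hn.trans (pi_binForm_zero_equivalent_hyp n)⟩

theorem hyperbolic_iff [CharP F 2] {q : QF F} (hq : IsNonsingular q.toForm) :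
    q.Hyperbolic ↔ IsMetabolic q.toForm := by
  simp only [Hyperbolic, isometric_iff]
  exact ⟨fun ⟨n, hn⟩ ↦ (isMetabolic_hyp n).of_equivalent hn.symm,
    fun h ↦ exists_equivalent_hyp h hq⟩

theorem isMetabolic_hyp_orthSum_zeros [CharP F 2] (n l : ℕ) :
    IsMetabolic ((hyp n).orthSum (zeros l) : QF F).toForm :=
  ((isMetabolic_hyp n).prod (toForm_zeros (F := F) l ▸ .zero)).of_equivalent
    (prod_equivalent_orthSum _ _)

theorem prod_equivalent_orthSum_hyp {V : Type*} [AddCommGroup V] [Module F V]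
    {Q : QuadraticForm F V} {n : ℕ} (q : QF F) (e : Q.Equivalent (hyp n).toForm) :
    (q.toForm.prod Q).Equivalent (q.orthSum ((hyp n).orthSum (zeros 0))).toForm :=
  have : Subsingleton (Fin (zeros 0 : QF F).dim → F) := inferInstanceAs (Subsingleton (Fin 0 → F))
  ((Equivalent.refl _).prod <| e.trans <|
    (equivalent_prod_of_subsingleton _ _).trans (prod_equivalent_orthSum _ _)).trans
      (prod_equivalent_orthSum _ _)

theorem wittEquiv_iff_wittRel [CharP F 2] {q q' : QF F} (hq : IsNonsingular q.toForm)
    (hq' : IsNonsingular q'.toForm) : WittEquiv q q' ↔ WittRel q.toForm q'.toForm := by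
  simp only [WittEquiv, isometric_iff]
  refine ⟨fun ⟨n, n', l, l', e⟩ ↦ ?_, fun h ↦ ?_⟩
  · exact .of_equivalent_prod hq' (isMetabolic_hyp_orthSum_zeros n l)
      (isMetabolic_hyp_orthSum_zeros n' l') <|
      (prod_equivalent_orthSum _ _).trans (e.trans (prod_equivalent_orthSum _ _).symm)
  · have h' := hq'.isMetabolic_prod_neg
    rw [WittRel] at h
    rw [neg_eq_self_charTwo] at h h'
    obtain ⟨n, hn⟩ := exists_equivalent_hyp h (hq.prod hq')
    obtain ⟨n', hn'⟩ := exists_equivalent_hyp h' (hq'.prod hq')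
    have e : (q.toForm.prod (q'.toForm.prod q'.toForm)).Equivalent
        (q'.toForm.prod (q.toForm.prod q'.toForm)) :=
      (prod_assoc_equivalent _ _ _).symm.trans ⟨IsometryEquiv.prodComm _ _⟩
    exact ⟨n', n, 0, 0, (prod_equivalent_orthSum_hyp q hn').symm.trans
      (e.trans (prod_equivalent_orthSum_hyp q' hn))⟩

theorem isNonsingular_orthSum_smul {q : QF F} (hq : IsNonsingular q.toForm) {a : F} (ha : a ≠ 0) :
    IsNonsingular (q.orthSum (smul a q)).toForm :=
  (hq.prod ((hq.smul ha).of_equivalent (smul_equivalent_toForm a q))).of_equivalent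
    (prod_equivalent_orthSum _ _)

end QF

theorem wittClass_orthSum_smul {q : QF F} (hq : IsNonsingular q.toForm) (u : Fˣ) :
    wittClass (q.orthSum (QF.smul u q)).toForm (QF.isNonsingular_orthSum_smul hq u.ne_zero) =
      wittClass q.toForm hq + WittGroup.scale u (wittClass q.toForm hq) := by
  have e := QF.smul_equivalent_toForm u.1 q
  rw [WittGroup.scale_wittClass, wittClass_congr (h₂ := (hq.smul u.ne_zero).of_equivalent e) e,
    wittClass_orthSum]

theorem exists_wittClass_sumList_mem {H : AddSubgroup (WittGroup F)} {l : List (QF F)}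
    (hl : ∀ q ∈ l, ∃ hq, wittClass q.toForm hq ∈ H) :
    ∃ hs, wittClass (QF.sumList l).toForm hs ∈ H := by
  induction l with
  | nil =>
    have hnil : wittClass (QF.nil : QF F).toForm QF.isNonsingular_nil = 0 :=
      wittClass_eq_zero_iff.2 QF.isMetabolic_nil
    exact ⟨QF.isNonsingular_nil, hnil.symm ▸ zero_mem H⟩
  | cons q l ih =>
    obtain ⟨⟨hq, hqH⟩, hl⟩ := List.forall_mem_cons.1 hl
    obtain ⟨hs, hsH⟩ := ih hl
    refine ⟨(hq.prod hs).of_equivalent (QF.prod_equivalent_orthSum _ _), ?_⟩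
    exact (wittClass_orthSum hq hs _).symm ▸ add_mem hqH hsH

variable {T : Set F}

theorem exists_wittClass_sumList_eq_of_mem_pfisterSum [CharP F 2] {w : WittGroup F}
    (hw : w ∈ pfisterSum T) : ∃ l : List (F × QF F), (∀ p ∈ l, p.1 ∈ T ∧ p.2.Nonsingular) ∧
      ∃ hs, wittClass (QF.sumList (l.map fun p ↦ p.2.orthSum (QF.smul p.1 p.2))).toForm hs = w := by
  let P (w : WittGroup F) : Prop := ∃ l : List (F × QF F),
    (∀ p ∈ l, p.1 ∈ T ∧ p.2.Nonsingular) ∧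
      ∃ hs, wittClass (QF.sumList (l.map fun p ↦ p.2.orthSum (QF.smul p.1 p.2))).toForm hs = w
  have hadd {u : Fˣ} (hu : ↑u ∈ T) (v : WittGroup F) {w : WittGroup F} (hw : P w) :
      P (v + WittGroup.scale u v + w) := by
    obtain ⟨l, hl, hs, rfl⟩ := hw
    obtain ⟨q, hq, rfl⟩ := v.exists_wittClass_eq
    have hqs := QF.isNonsingular_orthSum_smul hq u.ne_zero
    refine ⟨(u.1, q) :: l, List.forall_mem_cons.2 ⟨⟨hu, QF.nonsingular_iff.2 hq⟩, hl⟩,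
      (hqs.prod hs).of_equivalent (QF.prod_equivalent_orthSum _ _), ?_⟩
    rw [← wittClass_orthSum_smul hq u]
    exact wittClass_orthSum hqs hs _
  change P w
  induction hw using AddSubgroup.closure_induction_left with
  | zero =>
    exact ⟨[], List.forall_mem_nil _, QF.isNonsingular_nil,
      wittClass_eq_zero_iff.2 QF.isMetabolic_nil⟩
  | add_left x hx y _ ih =>
    obtain ⟨u, hu, v, rfl⟩ := hx
    exact hadd hu v ih
  | neg_add_cancel x hx y _ ih =>
    obtain ⟨u, hu, v, rfl⟩ := hx
    rw [neg_eq_of_add_eq_zero_left (WittGroup.add_self _)]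
    exact hadd hu v ih

theorem wittClass_mem_pfisterSum_iff [CharP F 2] (h0 : (0 : F) ∉ T) {q : QF F}
    (hq : IsNonsingular q.toForm) :
    wittClass q.toForm hq ∈ pfisterSum T ↔ ∃ l : List (F × QF F),
      (∀ p ∈ l, p.1 ∈ T ∧ p.2.Nonsingular) ∧
        QF.WittEquiv q (QF.sumList (l.map fun p ↦ p.2.orthSum (QF.smul p.1 p.2))) := by
  refine ⟨fun h ↦ ?_, fun ⟨l, hl, h⟩ ↦ ?_⟩
  · obtain ⟨l, hl, hs, hlq⟩ := exists_wittClass_sumList_eq_of_mem_pfisterSum h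
    exact ⟨l, hl, (QF.wittEquiv_iff_wittRel hq hs).2 (wittClass_eq_iff.1 hlq.symm)⟩
  · obtain ⟨hs, hsT⟩ := exists_wittClass_sumList_mem (H := pfisterSum T) <|
      List.forall_mem_map.2 fun p hp ↦ by
        have hp₂ := QF.nonsingular_iff.1 (hl p hp).2
        let u := Units.mk0 p.1 (ne_of_mem_of_not_mem (hl p hp).1 h0)
        exact ⟨QF.isNonsingular_orthSum_smul hp₂ u.ne_zero,
          (wittClass_orthSum_smul hp₂ u).symm ▸ add_scale_mem_pfisterSum (hl p hp).1 _⟩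
    rwa [wittClass_eq_iff.2 ((QF.wittEquiv_iff_wittRel hq hs).1 h)]

end Comparison

theorem zero_notMem_of_finrank_adjoin {k F : Type*} [Field k] [Field F] [Algebra k F] {T : Set F}
    (hT : ∀ t ∈ T, Module.finrank k (Algebra.adjoin k {t}) = 2) : (0 : F) ∉ T := fun h ↦ by
  have h2 := hT 0 h
  rw [Algebra.adjoin_singleton_zero, Subalgebra.finrank_bot] at h2
  exact absurd h2 (by decide)

theorem wittKernel_two_independent_generators_general {F K : Type*} [Field F] [Field K]
    [Algebra F K] [CharP F 2] {T : Set F} (h0 : (0 : F) ∉ T)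
    (hroot : ∀ t ∈ T, ∃ x : K, x ^ 2 = algebraMap F K t)
    (hgen : Algebra.adjoin F {x : K | ∃ t ∈ T, x ^ 2 = algebraMap F K t} = ⊤)
    {q : QF F} (hq : q.Nonsingular) :
    (q.map (algebraMap F K)).Hyperbolic ↔ ∃ l : List (F × QF F),
      (∀ p ∈ l, p.1 ∈ T ∧ p.2.Nonsingular) ∧
        QF.WittEquiv q (QF.sumList (l.map fun p ↦ p.2.orthSum (QF.smul p.1 p.2))) := by
  have : CharP K 2 := charP_of_injective_algebraMap (algebraMap F K).injective 2
  replace hq := QF.nonsingular_iff.1 hq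
  rw [QF.hyperbolic_iff (QF.isNonsingular_map hq),
    ← wittClass_eq_zero_iff (hQ := QF.isNonsingular_map hq),
    ← WittGroup.baseChange_wittClass_toForm K hq, ← AddMonoidHom.mem_ker,
    ker_baseChange_eq_pfisterSum h0 hroot hgen, wittClass_mem_pfisterSum_iff h0 hq]

set_option synthInstance.maxHeartbeats 1000000 in
open QF in
/-- Let `F` have characteristic 2, let `K/F` be purely inseparable of
exponent 1 (`K² ⊆ F`), and let `T ⊆ F` be a 2-independent set (for every finite subset
`{t₁,…,tₘ} ⊆ T` one has `[F(√t₁,…,√tₘ):F] = [F²(t₁,…,tₘ):F²] = 2^m`) such that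
`K = F(√t : t ∈ T)`.  Then `W_q(K/F) = Σ_{t ∈ T} ⟨1,t⟩_b ⊗ W_q(F)`. -/
theorem wittKernel_two_independent_generators
    (F K : Type*) [Field F] [Field K] [Algebra F K] [CharP F 2]
    (hK : ∀ x : K, ∃ y : F, algebraMap F K y = x ^ 2)
    (T : Set F)
    (hTind : ∀ s : Finset F, ↑s ⊆ T →
      Module.finrank (RingHom.fieldRange (frobenius F 2))
        (Algebra.adjoin (RingHom.fieldRange (frobenius F 2)) (s : Set F)) = 2 ^ s.card ∧
      ∀ r : s → K, (∀ i : s, (r i) ^ 2 = algebraMap F K i.1) →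
        Module.finrank F (Algebra.adjoin F (Set.range r)) = 2 ^ s.card)
    (hroot : ∀ t ∈ T, ∃ x : K, x ^ 2 = algebraMap F K t)
    (hgen : Algebra.adjoin F {x : K | ∃ t ∈ T, x ^ 2 = algebraMap F K t} = ⊤) :
    ∀ q : QF F, q.Nonsingular →
      (Hyperbolic (q.map (algebraMap F K)) ↔
        ∃ l : List (F × QF F), (∀ p ∈ l, p.1 ∈ T ∧ p.2.Nonsingular) ∧
          WittEquiv q (sumList (l.map fun p => p.2.orthSum (smul p.1 p.2)))) := by
  have h0 : (0 : F) ∉ T :=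
    zero_notMem_of_finrank_adjoin (k := RingHom.fieldRange (frobenius F 2)) fun t ht ↦ by
      have h := (hTind {t} (by simpa using ht)).1
      rwa [Finset.coe_singleton, Finset.card_singleton, pow_one] at h
  exact fun _ ↦ wittKernel_two_independent_generators_general h0 hroot hgen
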